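/- (Theorem 3.2, part 1.) There exists σ₀ > 0 such that for every σ ≥ σ₀ the following holds. Let {Z^(k)} ⊆ (ℝ^{K×K})^{N−1} be any (inexact PBCD) sequence and let {Z̄^(k)} be its block-optimal sequence. Assume: (i) {f_β(Z̄^(k))} is nonincreasing, with limit F̄, and f_β(Z̄^(k)) > F̄ for all k ≥ 1; (ii) Σ_{k=1}^∞ ‖Z̄^(k) − Z^(k)‖_F < ∞. Then the sequence {Z^(k)} converges to a KKT point of the penalized problem (P_β). -/

import Mathlib

open Matrix Finset Filter Topology

noncomputable section

/-- Trace inner product `⟨A,B⟩ = Tr(AᵀB)` on `K×K` real matrices. -/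
def mip {K : ℕ} (A B : Matrix (Fin K) (Fin K) ℝ) : ℝ := (Aᵀ * B).trace

/-- The section `S = {W : We = 𝟙, WᵀΞϱ = ϱ, Tr W = 0, W ≥ 0}` of the feasible region. -/
def Sset {K : ℕ} (e ϱ : Fin K → ℝ) : Set (Matrix (Fin K) (Fin K) ℝ) :=
  {W | W.mulVec e = (fun _ => 1) ∧ Wᵀ.mulVec (fun j => e j * ϱ j) = ϱ ∧
    W.trace = 0 ∧ ∀ a b, 0 ≤ W a b}

/-- The discretized repulsive energy
`f(Z) = Σ_i ⟨X_i, ΛΞCΞ⟩ + Σ_{i<j} ⟨X_i, ΞΛX_jΞCΞ⟩` (blocks indexed by `Fin m`, `m = N−1`). -/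
def fE {K m : ℕ} (e ϱ : Fin K → ℝ) (C : Matrix (Fin K) (Fin K) ℝ)
    (Z : Fin m → Matrix (Fin K) (Fin K) ℝ) : ℝ :=
  (∑ i, mip (Z i) (diagonal ϱ * diagonal e * C * diagonal e)) +
    ∑ i, ∑ j ∈ Finset.Ioi i,
      mip (Z i) (diagonal e * diagonal ϱ * Z j * diagonal e * C * diagonal e)

/-- The `ℓ₁`-penalized energy `f_β(Z) = f(Z) + β Σ_{i<j} ⟨X_i, X_j⟩`. -/
def fB {K m : ℕ} (e ϱ : Fin K → ℝ) (C : Matrix (Fin K) (Fin K) ℝ) (β : ℝ)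
    (Z : Fin m → Matrix (Fin K) (Fin K) ℝ) : ℝ :=
  fE e ϱ C Z + β * ∑ i, ∑ j ∈ Finset.Ioi i, mip (Z i) (Z j)

/-- The block gradient
`∇_{X_i} f_β(Z) = ΛΞCΞ + Σ_{j<i} ΛΞX_jΞCΞ + Σ_{j>i} ΞΛX_jΞCΞ + β Σ_{j≠i} X_j`. -/
def gradB {K m : ℕ} (e ϱ : Fin K → ℝ) (C : Matrix (Fin K) (Fin K) ℝ) (β : ℝ)
    (Z : Fin m → Matrix (Fin K) (Fin K) ℝ) (i : Fin m) : Matrix (Fin K) (Fin K) ℝ :=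
  diagonal ϱ * diagonal e * C * diagonal e
    + ∑ j ∈ Finset.Iio i, diagonal ϱ * diagonal e * Z j * diagonal e * C * diagonal e
    + ∑ j ∈ Finset.Ioi i, diagonal e * diagonal ϱ * Z j * diagonal e * C * diagonal e
    + β • ∑ j ∈ Finset.univ.erase i, Z j

/-- `Z* ∈ S^{N−1}` is a KKT point of the penalized problem `(P_β)` if
`⟨∇_{X_i} f_β(Z*), X − X*_i⟩ ≥ 0` for all `X ∈ S` and all blocks `i`. -/
def IsKKT {K m : ℕ} (e ϱ : Fin K → ℝ) (C : Matrix (Fin K) (Fin K) ℝ) (β : ℝ)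
    (Z : Fin m → Matrix (Fin K) (Fin K) ℝ) : Prop :=
  (∀ i, Z i ∈ Sset e ϱ) ∧
    ∀ i, ∀ X ∈ Sset e ϱ, 0 ≤ mip (gradB e ϱ C β Z i) (X - Z i)

/-- The `i`-th block objective of PBCD at outer iterate `Zold` (with the already-updated
blocks taken from `Znew`):
`X ↦ f_β(Znew_{<i}, X, Zold_{>i}) + (σ/2)‖X − Zold_i‖_F²`. -/
def blockObj {K m : ℕ} (e ϱ : Fin K → ℝ) (C : Matrix (Fin K) (Fin K) ℝ) (β σ : ℝ)
    (Zold Znew : Fin m → Matrix (Fin K) (Fin K) ℝ) (i : Fin m)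
    (X : Matrix (Fin K) (Fin K) ℝ) : ℝ :=
  fB e ϱ C β (fun j => if j < i then Znew j else if j = i then X else Zold j)
    + σ / 2 * mip (X - Zold i) (X - Zold i)

/-- `Zseq` is an exact PBCD sequence: for every `k` and every block `i` (in order),
`X_i^{(k+1)}` is the (unique) global solution of the `i`-th block problem. -/
def IsPBCD {K m : ℕ} (e ϱ : Fin K → ℝ) (C : Matrix (Fin K) (Fin K) ℝ) (β σ : ℝ)
    (Zseq : ℕ → Fin m → Matrix (Fin K) (Fin K) ℝ) : Prop :=
  ∀ k i, Zseq (k + 1) i ∈ Sset e ϱ ∧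
    ∀ X ∈ Sset e ϱ,
      blockObj e ϱ C β σ (Zseq k) (Zseq (k + 1)) i (Zseq (k + 1) i) ≤
        blockObj e ϱ C β σ (Zseq k) (Zseq (k + 1)) i X

/-- `Zbar` is the block-optimal sequence of `Zseq`: `X̄_i^{(k+1)}` is the (unique) global
solution of the `i`-th block problem built from the iterates of `Zseq` themselves. -/
def IsBlockOpt {K m : ℕ} (e ϱ : Fin K → ℝ) (C : Matrix (Fin K) (Fin K) ℝ) (β σ : ℝ)
    (Zseq Zbar : ℕ → Fin m → Matrix (Fin K) (Fin K) ℝ) : Prop :=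
  ∀ k i, Zbar (k + 1) i ∈ Sset e ϱ ∧
    ∀ X ∈ Sset e ϱ,
      blockObj e ϱ C β σ (Zseq k) (Zseq (k + 1)) i (Zbar (k + 1) i) ≤
        blockObj e ϱ C β σ (Zseq k) (Zseq (k + 1)) i X

/-- Frobenius norm of a block tuple `Z ∈ (ℝ^{K×K})^m`. -/
def nZ {K m : ℕ} (Z : Fin m → Matrix (Fin K) (Fin K) ℝ) : ℝ :=
  Real.sqrt (∑ i, mip (Z i) (Z i))

/-!
The energy is a quadratic `f z = ⟨c, z⟩ + ⟨z, U z⟩` with `U` strictly block upper triangular, so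
`f y - f x = ⟨c + U† x + U y, y - x⟩` holds exactly, and the vector `c + U† x + U y` is the gradient
seen by a Gauss–Seidel sweep. Since the increment of `f` carries no curvature error, every `σ > 0`
gives sufficient decrease `σ‖z_k - z_{k+1}‖² ≤ f z_k - f z_{k+1} + error` along the block-optimal
iterates, together with a constrained subgradient at `z_{k+1}` bounded by `‖z_k - z_{k+1}‖` and the
inexactness.

On the set of points with a given active set, the constrained subgradients are the gradients of a
quadratic up to vectors orthogonal to the face, so `f x - f y` is controlled by the squared
difference of subgradients at `x` and `y`. There are finitely many active sets, so each one that
occurs late occurs infinitely often; letting `y` run through its later occurrences gives the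
Kurdyka–Łojasiewicz inequality with exponent `1/2` along the sequence. With it, the steps
`‖z_k - z_{k+1}‖` are summable, hence the iterates converge, and the stationarity of the limit is
the closedness of the graph of the constrained subgradient.
-/

open scoped InnerProductSpace InnerProduct

section RealSequences

lemma le_add_half_add_of_sq_le {p q r x : ℝ} (hp : 0 ≤ p) (hqr : 0 ≤ q + r)
    (hx : x ^ 2 ≤ p * x + q * r) : x ≤ p + (q + r) / 2 := by
  by_contra! hlt
  nlinarith [sq_nonneg (q - r), mul_nonneg hp hqr]

lemma summable_of_le_mul_add {D w : ℕ → ℝ} {θ : ℝ} (hθ : θ < 1) (hD : ∀ k, 0 ≤ D k)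
    (hw : Summable w) (hrec : ∀ k, D (k + 1) ≤ θ * D k + w k) : Summable D := by
  obtain ⟨B, hB⟩ := hw.hasSum.tendsto_sum_nat.bddAbove_range
  have htelescope (n : ℕ) :
      (1 - θ) * ∑ k ∈ range n, D k ≤ D 0 + ∑ k ∈ range n, w k - D n := by
    induction n with
    | zero => simp
    | succ n ih =>
      rw [sum_range_succ, sum_range_succ]
      linarith [hrec n]
  refine summable_of_sum_range_le (c := (D 0 + B) / (1 - θ)) hD fun n => ?_
  rw [le_div_iff₀' (sub_pos.2 hθ)]
  linarith [htelescope n, hD n, hB (Set.mem_range_self n)]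

lemma summable_sub_succ_of_antitone {s : ℕ → ℝ} (hs : Antitone s) (hs0 : ∀ k, 0 ≤ s k) :
    Summable fun k => s k - s (k + 1) := by
  refine summable_of_sum_range_le (c := s 0) (fun k => sub_nonneg.2 (hs k.le_succ)) fun n => ?_
  rw [sum_range_sub']
  linarith [hs0 n]

lemma tendsto_zero_of_sufficient_decrease {a b F : ℝ} (ha : 0 < a) {D δ φ : ℕ → ℝ}
    (hδ : Tendsto δ atTop (𝓝 0)) (hφ : Tendsto φ atTop (𝓝 F))
    (hdescent : ∀ k, a * D k ^ 2 ≤ φ k - φ (k + 1) + b * δ k * D k) :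
    Tendsto D atTop (𝓝 0) := by
  have hbound (k : ℕ) : D k ^ 2 ≤ 2 / a * (φ k - φ (k + 1)) + (b / a) ^ 2 * δ k ^ 2 := by
    have hscaled : D k ^ 2 ≤ 1 / a * (φ k - φ (k + 1)) + b / a * δ k * D k := by
      rw [← mul_le_mul_iff_of_pos_left ha]
      calc a * D k ^ 2 ≤ φ k - φ (k + 1) + b * δ k * D k := hdescent k
        _ = a * (1 / a * (φ k - φ (k + 1)) + b / a * δ k * D k) := by field_simp
    linear_combination 2 * hscaled + two_mul_le_add_sq (b / a * δ k) (D k)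
  have hlimit :
      Tendsto (fun k => 2 / a * (φ k - φ (k + 1)) + (b / a) ^ 2 * δ k ^ 2) atTop (𝓝 0) := by
    simpa using ((hφ.sub ((tendsto_add_atTop_iff_nat 1).2 hφ)).const_mul (2 / a)).add
      ((hδ.pow 2).const_mul ((b / a) ^ 2))
  have hsq := (squeeze_zero (fun k => sq_nonneg (D k)) hbound hlimit).sqrt
  simp only [Real.sqrt_sq_eq_abs, Real.sqrt_zero] at hsq
  exact (tendsto_zero_iff_abs_tendsto_zero D).2 hsq

/-- One step of the Kurdyka–Łojasiewicz argument with exponent `1/2`, where `√φ` is the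
desingularizing function. -/
lemma le_half_add_of_sufficient_decrease {a b C D D' δ δ' φ φ' : ℝ} (ha : 0 < a) (hb : 0 ≤ b)
    (hC : 0 ≤ C) (hD : 0 ≤ D) (hδ : 0 ≤ δ) (hδ' : 0 ≤ δ') (hφ : 0 ≤ φ) (hφ' : 0 ≤ φ')
    (hle : φ' ≤ φ) (hdescent : a * D' ^ 2 ≤ φ - φ' + b * δ' * D')
    (hKL : φ ≤ C * (D + δ) ^ 2) :
    D' ≤ 1 / 2 * D + (1 / 2 * δ + b / a * δ' + √C / a * (√φ - √φ')) := by
  have hsqrt_le : √φ' ≤ √φ := Real.sqrt_le_sqrt hle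
  have hsqrt_KL : √φ ≤ √C * (D + δ) := by
    refine Real.sqrt_le_iff.2 ⟨by positivity, ?_⟩
    rwa [mul_pow, Real.sq_sqrt hC]
  have hgap : φ - φ' ≤ 2 * (√C * (D + δ)) * (√φ - √φ') :=
    calc φ - φ' = (√φ + √φ') * (√φ - √φ') := by
          linear_combination -Real.sq_sqrt hφ + Real.sq_sqrt hφ'
      _ ≤ 2 * (√C * (D + δ)) * (√φ - √φ') :=
          mul_le_mul_of_nonneg_right (by linarith) (sub_nonneg.2 hsqrt_le)
  have hquad : D' ^ 2 ≤ b / a * δ' * D' + (D + δ) * (2 * √C / a * (√φ - √φ')) := by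
    rw [← mul_le_mul_iff_of_pos_left ha]
    calc a * D' ^ 2 ≤ 2 * (√C * (D + δ)) * (√φ - √φ') + b * δ' * D' := by linarith
      _ = a * (b / a * δ' * D' + (D + δ) * (2 * √C / a * (√φ - √φ'))) := by field_simp; ring
  have hroot := le_add_half_add_of_sq_le (by positivity)
    (add_nonneg (add_nonneg hD hδ) (mul_nonneg (by positivity) (sub_nonneg.2 hsqrt_le))) hquad
  linear_combination hroot

lemma summable_of_sufficient_decrease {a b C : ℝ} (ha : 0 < a) (hb : 0 ≤ b) (hC : 0 ≤ C)
    {D δ φ : ℕ → ℝ} (hD : ∀ k, 0 ≤ D k) (hδ0 : ∀ k, 0 ≤ δ k) (hδ : Summable δ)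
    (hφ0 : ∀ k, 0 ≤ φ k) (hφ : Antitone φ)
    (hdescent : ∀ k, a * D k ^ 2 ≤ φ k - φ (k + 1) + b * δ k * D k)
    (hKL : ∀ᶠ k in atTop, φ (k + 1) ≤ C * (D k + δ k) ^ 2) : Summable D := by
  obtain ⟨k₀, hk₀⟩ := eventually_atTop.1 hKL
  have hsqrt : Summable fun k => √(φ k) - √(φ (k + 1)) :=
    summable_sub_succ_of_antitone (fun _ _ h => Real.sqrt_le_sqrt (hφ h))
      fun _ => Real.sqrt_nonneg _
  have herror : Summable fun k => 1 / 2 * δ k + b / a * δ (k + 1)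
      + √C / a * (√(φ (k + 1)) - √(φ (k + 2))) :=
    ((hδ.mul_left _).add (((summable_nat_add_iff 1).2 hδ).mul_left _)).add
      (((summable_nat_add_iff 1).2 hsqrt).mul_left _)
  rw [← summable_nat_add_iff k₀]
  refine summable_of_le_mul_add (θ := 1 / 2) (by norm_num) (fun k => hD _)
    ((summable_nat_add_iff k₀).2 herror) fun k => ?_
  rw [add_right_comm]
  exact le_half_add_of_sufficient_decrease ha hb hC (hD _) (hδ0 _) (hδ0 _) (hφ0 _) (hφ0 _)
    (hφ (Nat.le_succ _)) (hdescent _) (hk₀ _ (Nat.le_add_left _ _))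

end RealSequences

lemma eventually_frequently_eq_of_finite_range {ι α : Type*} {l : Filter ι} {J : ι → α}
    (hJ : (Set.range J).Finite) : ∀ᶠ k in l, ∃ᶠ k' in l, J k' = J k := by
  have hvalue : ∀ᶠ k in l, ∀ j ∈ Set.range J, J k = j → ∃ᶠ k' in l, J k' = j := by
    refine (eventually_all_finite hJ).2 fun j _ => ?_
    by_cases hj : ∃ᶠ k' in l, J k' = j
    · exact Eventually.of_forall fun _ _ => hj
    · filter_upwards [not_frequently.1 hj] with k hk hkj using absurd hkj hk
  filter_upwards [hvalue] with k hk using hk _ (Set.mem_range_self k) rfl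

section SymmetricOperators

variable {V : Type*} [NormedAddCommGroup V] [InnerProductSpace ℝ V] [FiniteDimensional ℝ V]

lemma exists_inner_self_le_mul_sq_norm {T : V →ₗ[ℝ] V} (hT : T.IsSymmetric) :
    ∃ C : ℝ, 0 ≤ C ∧ ∀ d, ⟪T d, d⟫_ℝ ≤ C * ‖T d‖ ^ 2 := by
  obtain ⟨C, hC, hpreimage⟩ :=
    (LinearMap.toContinuousLinearMap T.rangeRestrict).exists_preimage_norm_le
      T.surjective_rangeRestrict
  refine ⟨C, hC.le, fun d => ?_⟩
  obtain ⟨u, hu, hnorm⟩ := hpreimage (T.rangeRestrict d)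
  have hTu : T u = T d := congrArg Subtype.val hu
  calc ⟪T d, d⟫_ℝ = ⟪u, T d⟫_ℝ := by rw [← hT, hTu]
    _ ≤ ‖u‖ * ‖T d‖ := real_inner_le_norm _ _
    _ ≤ C * ‖T d‖ * ‖T d‖ := by gcongr; exact hnorm
    _ = C * ‖T d‖ ^ 2 := by ring

lemma exists_inner_self_le_mul_sq_norm_on {T : V →ₗ[ℝ] V} (hT : T.IsSymmetric)
    (L : Submodule ℝ V) :
    ∃ C : ℝ, 0 ≤ C ∧ ∀ d ∈ L, ∀ w, (∀ x ∈ L, ⟪T d, x⟫_ℝ = ⟪w, x⟫_ℝ) →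
      ⟪T d, d⟫_ℝ ≤ C * ‖w‖ ^ 2 := by
  let P : V →ₗ[ℝ] V := L.starProjection
  have hP : P.IsSymmetric := L.starProjection_isSymmetric
  obtain ⟨C, hC, hbound⟩ := exists_inner_self_le_mul_sq_norm (T := P ∘ₗ T ∘ₗ P)
    fun x y => by simp only [LinearMap.comp_apply, hP _ y, hT _ (P y), hP x]
  refine ⟨C, hC, fun d hd w hw => ?_⟩
  have hPd : P d = d := L.starProjection_eq_self_iff.2 hd
  have hPw : P (T d) = P w := ext_inner_right ℝ fun x => by
    rw [hP, hP]
    exact hw _ (L.starProjection_apply_mem x)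
  calc ⟪T d, d⟫_ℝ = ⟪P (T (P d)), d⟫_ℝ := by rw [hP, hPd]
    _ ≤ C * ‖P (T (P d))‖ ^ 2 := hbound d
    _ = C * ‖P w‖ ^ 2 := by rw [hPd, hPw]
    _ ≤ C * ‖w‖ ^ 2 := by gcongr; exact L.norm_starProjection_apply_le w

end SymmetricOperators

section Polyhedra

variable {V : Type*} [AddCommGroup V] [Module ℝ V] {s : Set ((V →ₗ[ℝ] ℝ) × ℝ)} {P Q : Set V}
  {x d : V}

/-- The solution set of the system of affine inequalities `b ≤ ℓ x`, `(ℓ, b) ∈ s`. -/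
def polyhedron (s : Set ((V →ₗ[ℝ] ℝ) × ℝ)) : Set V := {x | ∀ p ∈ s, p.2 ≤ p.1 x}

/-- A set is polyhedral if it is cut out by finitely many affine inequalities. It need not be
bounded, and affine equations are encoded as pairs of opposite inequalities. -/
def IsPolyhedral (P : Set V) : Prop := ∃ s, s.Finite ∧ P = polyhedron s

/-- The inequalities of the system `s` that are tight at `x`; they determine the face of
`polyhedron s` with `x` in its relative interior. -/
def activeSet (s : Set ((V →ₗ[ℝ] ℝ) × ℝ)) (x : V) : Set ((V →ₗ[ℝ] ℝ) × ℝ) :=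
  {p ∈ s | p.1 x = p.2}

/-- The direction space of the face on which all inequalities of `A` are tight. -/
def faceDirection (A : Set ((V →ₗ[ℝ] ℝ) × ℝ)) : Submodule ℝ V := ⨅ p ∈ A, LinearMap.ker p.1

lemma mem_faceDirection {A : Set ((V →ₗ[ℝ] ℝ) × ℝ)} :
    d ∈ faceDirection A ↔ ∀ p ∈ A, p.1 d = 0 := by
  simp only [faceDirection, Submodule.mem_iInf, LinearMap.mem_ker]

lemma sub_mem_faceDirection {y : V} (h : activeSet s x = activeSet s y) :
    x - y ∈ faceDirection (activeSet s x) := by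
  refine mem_faceDirection.2 fun p hp => ?_
  rw [map_sub, hp.2, (h ▸ hp : p ∈ activeSet s y).2, sub_self]

lemma eventually_add_smul_mem_polyhedron (hs : s.Finite) (hx : x ∈ polyhedron s)
    (hd : d ∈ faceDirection (activeSet s x)) : ∀ᶠ t : ℝ in 𝓝[>] 0, x + t • d ∈ polyhedron s := by
  refine (eventually_all_finite hs).2 fun p hp => ?_
  simp only [map_add, map_smul, smul_eq_mul]
  rcases (hx p hp).eq_or_lt with hactive | hinactive
  · refine Eventually.of_forall fun t => ?_
    rw [mem_faceDirection.1 hd p ⟨hp, hactive.symm⟩, mul_zero, add_zero]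
    exact hx p hp
  · have hlimit : Tendsto (fun t : ℝ => p.1 x + t * p.1 d) (𝓝[>] 0) (𝓝 (p.1 x)) :=
      (Continuous.tendsto' (by fun_prop) 0 _ (by simp)).mono_left nhdsWithin_le_nhds
    filter_upwards [hlimit.eventually_const_lt hinactive] with t ht using ht.le

lemma isPolyhedral_setOf_le {φ : V → ℝ} (hφ : IsLinearMap ℝ φ) (b : ℝ) :
    IsPolyhedral {x | b ≤ φ x} :=
  ⟨{(hφ.mk' φ, b)}, Set.finite_singleton _, by simp [polyhedron]⟩

namespace IsPolyhedral

lemma inter (hP : IsPolyhedral P) (hQ : IsPolyhedral Q) : IsPolyhedral (P ∩ Q) := by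
  obtain ⟨s, hs, rfl⟩ := hP
  obtain ⟨t, ht, rfl⟩ := hQ
  refine ⟨s ∪ t, hs.union ht, ?_⟩
  ext x
  simp only [polyhedron, Set.mem_inter_iff, Set.mem_ofPred_eq, Set.mem_union, or_imp, forall_and]

lemma iInter {ι : Type*} [Finite ι] {P : ι → Set V} (hP : ∀ i, IsPolyhedral (P i)) :
    IsPolyhedral (⋂ i, P i) := by
  choose s hs hPs using hP
  refine ⟨⋃ i, s i, Set.finite_iUnion hs, ?_⟩
  ext x
  simp only [hPs, polyhedron, Set.mem_iInter, Set.mem_ofPred_eq, Set.mem_iUnion,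
    forall_exists_index]
  exact forall_comm

lemma preimage {W : Type*} [AddCommGroup W] [Module ℝ W] (hP : IsPolyhedral P)
    (f : W →ₗ[ℝ] V) : IsPolyhedral (f ⁻¹' P) := by
  obtain ⟨s, hs, rfl⟩ := hP
  refine ⟨(fun p => (p.1 ∘ₗ f, p.2)) '' s, hs.image _, ?_⟩
  ext x
  simp only [polyhedron, Set.mem_preimage, Set.mem_ofPred_eq, Set.forall_mem_image,
    LinearMap.comp_apply]

lemma convex (hP : IsPolyhedral P) : Convex ℝ P := by
  obtain ⟨s, -, rfl⟩ := hP
  simp only [polyhedron, Set.ofPred_forall]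
  exact convex_iInter₂ fun p _ => convex_halfSpace_ge p.1.isLinear p.2

lemma isClosed [TopologicalSpace V] [IsTopologicalAddGroup V] [ContinuousSMul ℝ V] [T2Space V]
    [FiniteDimensional ℝ V] (hP : IsPolyhedral P) : IsClosed P := by
  obtain ⟨s, -, rfl⟩ := hP
  simp only [polyhedron, Set.ofPred_forall]
  exact isClosed_biInter fun p _ =>
    isClosed_le continuous_const p.1.continuous_of_finiteDimensional

end IsPolyhedral

lemma isPolyhedral_setOf_eq {φ : V → ℝ} (hφ : IsLinearMap ℝ φ) (b : ℝ) :
    IsPolyhedral {x | φ x = b} := by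
  have heq : {x | φ x = b} = {x | b ≤ φ x} ∩ {x | -b ≤ -φ x} := by
    ext x
    simp only [Set.mem_ofPred_eq, Set.mem_inter_iff, neg_le_neg_iff, le_antisymm_iff, and_comm]
  rw [heq]
  exact (isPolyhedral_setOf_le hφ b).inter (isPolyhedral_setOf_le (-hφ.mk' φ).isLinear (-b))

end Polyhedra

section VariationalInequalities

variable {V : Type*} [NormedAddCommGroup V] [InnerProductSpace ℝ V]

lemma inner_eq_zero_of_mem_faceDirection {s : Set ((V →ₗ[ℝ] ℝ) × ℝ)} (hs : s.Finite) {x w d : V}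
    (hx : x ∈ polyhedron s) (hw : ∀ X ∈ polyhedron s, 0 ≤ ⟪w, X - x⟫_ℝ)
    (hd : d ∈ faceDirection (activeSet s x)) : ⟪w, d⟫_ℝ = 0 := by
  have hnonneg {d : V} (hd : d ∈ faceDirection (activeSet s x)) : 0 ≤ ⟪w, d⟫_ℝ := by
    obtain ⟨t, hmem, ht⟩ :=
      ((eventually_add_smul_mem_polyhedron hs hx hd).and self_mem_nhdsWithin).exists
    have hinner := hw _ hmem
    rw [add_sub_cancel_left, real_inner_smul_right] at hinner
    exact nonneg_of_mul_nonneg_right hinner ht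
  have hneg := hnonneg (neg_mem hd)
  rw [inner_neg_right, neg_nonneg] at hneg
  exact hneg.antisymm (hnonneg hd)

lemma inner_add_smul_sub_nonneg_of_isMinOn {S : Set V} (hS : Convex ℝ S) {g x y : V} {σ : ℝ}
    (hx : x ∈ S) (hmin : IsMinOn (fun X => ⟪g, X⟫_ℝ + σ / 2 * ‖X - y‖ ^ 2) S x) {X : V}
    (hX : X ∈ S) : 0 ≤ ⟪g + σ • (x - y), X - x⟫_ℝ := by
  have hderiv := ((innerSL ℝ g).hasFDerivAt (x := x)).add
    (((hasFDerivAt_id x).sub_const y).norm_sq.const_mul (σ / 2))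
  have hnonneg := hmin.localize.hasFDerivWithinAt_nonneg hderiv.hasFDerivWithinAt
    (sub_mem_posTangentConeAt_of_segment_subset (hS.segment_subset hx hX))
  refine hnonneg.trans_eq ?_
  simp only [id_eq, ContinuousLinearMap.comp_id, _root_.add_apply, coe_innerSL_apply,
    _root_.smul_apply, nsmul_eq_mul, Nat.cast_ofNat, smul_eq_mul, inner_add_left,
    real_inner_smul_left]
  ring

end VariationalInequalities

section QuadraticEnergy

variable {V : Type*} [NormedAddCommGroup V] [InnerProductSpace ℝ V]

/-- The quadratic energy `⟨c, z⟩ + ⟨z, U z⟩`. For a block energy, `U` is the strictly upper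
triangular part of the Hessian. -/
def quadEnergy (c : V) (U : V →L[ℝ] V) (z : V) : ℝ := ⟪c, z⟫_ℝ + ⟪z, U z⟫_ℝ

variable [CompleteSpace V]

/-- The gradient of `quadEnergy c U` with its two halves evaluated at different points. On the
diagonal `x = y` it is the gradient; for a block energy it is the Gauss–Seidel gradient, which reads
earlier blocks from `x` and later ones from `y`. -/
def mixedGrad (c : V) (U : V →L[ℝ] V) (x y : V) : V := c + (U†) x + U y

variable (c : V) (U : V →L[ℝ] V)

lemma quadEnergy_sub (x y : V) :
    quadEnergy c U y - quadEnergy c U x = ⟪mixedGrad c U x y, y - x⟫_ℝ := by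
  simp only [quadEnergy, mixedGrad, inner_add_left, inner_sub_right,
    ContinuousLinearMap.adjoint_inner_left, real_inner_comm _ (U y)]
  ring

lemma quadEnergy_sub_eq_grad_add (x y : V) :
    quadEnergy c U y - quadEnergy c U x
      = ⟪mixedGrad c U x x, y - x⟫_ℝ + ⟪U (y - x), y - x⟫_ℝ := by
  rw [quadEnergy_sub, ← inner_add_left, mixedGrad, mixedGrad, map_sub, add_assoc _ (U x),
    add_sub_cancel]

lemma mixedGrad_sub (x y x' y' : V) :
    mixedGrad c U x y - mixedGrad c U x' y' = (U†) (x - x') + U (y - y') := by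
  simp only [mixedGrad, map_sub]
  abel

lemma norm_mixedGrad_sub_le (x y x' y' : V) :
    ‖mixedGrad c U x y - mixedGrad c U x' y'‖ ≤ ‖U‖ * (‖x - x'‖ + ‖y - y'‖) :=
  calc ‖mixedGrad c U x y - mixedGrad c U x' y'‖ ≤ ‖(U†) (x - x')‖ + ‖U (y - y')‖ := by
        rw [mixedGrad_sub]
        exact norm_add_le _ _
    _ ≤ ‖U†‖ * ‖x - x'‖ + ‖U‖ * ‖y - y'‖ := add_le_add ((U†).le_opNorm _) (U.le_opNorm _)
    _ = ‖U‖ * (‖x - x'‖ + ‖y - y'‖) := by rw [LinearIsometryEquiv.norm_map, mul_add]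

lemma continuous_mixedGrad_self : Continuous fun z => mixedGrad c U z z := by
  unfold mixedGrad
  fun_prop

lemma inner_hessian_self (d : V) : ⟪((U†) + U) d, d⟫_ℝ = 2 * ⟪U d, d⟫_ℝ := by
  rw [_root_.add_apply, inner_add_left, ContinuousLinearMap.adjoint_inner_left,
    real_inner_comm, two_mul]

lemma isSymmetric_hessian : (↑((U†) + U) : V →ₗ[ℝ] V).IsSymmetric := fun x y => by
  change ⟪(U†) x + U x, y⟫_ℝ = ⟪x, (U†) y + U y⟫_ℝ
  rw [inner_add_left, inner_add_right, ContinuousLinearMap.adjoint_inner_left,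
    ContinuousLinearMap.adjoint_inner_right, add_comm]

/-- `r` is a subgradient at `z` of `quadEnergy c U` plus the indicator function of `P`, so that
`r = 0` characterizes the stationary points of `quadEnergy c U` on a convex set `P`. -/
def IsConstrainedSubgradient (P : Set V) (r z : V) : Prop :=
  z ∈ P ∧ ∀ X ∈ P, 0 ≤ ⟪mixedGrad c U z z - r, X - z⟫_ℝ

variable {c U}

lemma IsConstrainedSubgradient.of_tendsto {P : Set V} (hP : IsClosed P) {r z : ℕ → V} {r₀ z₀ : V}
    (hrz : ∀ k, IsConstrainedSubgradient c U P (r k) (z k))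
    (hr : Tendsto r atTop (𝓝 r₀)) (hz : Tendsto z atTop (𝓝 z₀)) :
    IsConstrainedSubgradient c U P r₀ z₀ := by
  refine ⟨hP.mem_of_tendsto hz (.of_forall fun k => (hrz k).1), fun X hX => ?_⟩
  have hgrad := ((continuous_mixedGrad_self c U).tendsto z₀).comp hz
  exact ge_of_tendsto' ((hgrad.sub hr).inner (hz.const_sub X)) fun k => (hrz k).2 X hX

end QuadraticEnergy

section KurdykaLojasiewicz

variable {V : Type*} [NormedAddCommGroup V] [InnerProductSpace ℝ V] [FiniteDimensional ℝ V]
  (c : V) (U : V →L[ℝ] V)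

lemma exists_quadEnergy_sub_le_of_mem_faceDirection (L : Submodule ℝ V) :
    ∃ C : ℝ, 0 ≤ C ∧ ∀ x y u v : V, x - y ∈ L →
      (∀ d ∈ L, ⟪mixedGrad c U x x - u, d⟫_ℝ = 0) → (∀ d ∈ L, ⟪mixedGrad c U y y - v, d⟫_ℝ = 0) →
      quadEnergy c U x - quadEnergy c U y ≤ ⟪v, x - y⟫_ℝ + C * ‖u - v‖ ^ 2 := by
  obtain ⟨C, hC, hbound⟩ := exists_inner_self_le_mul_sq_norm_on (isSymmetric_hessian U) L
  refine ⟨C, hC, fun x y u v hxy hu hv => ?_⟩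
  have hhessian (d : V) (hd : d ∈ L) : ⟪((U†) + U) (x - y), d⟫_ℝ = ⟪u - v, d⟫_ℝ := by
    have hsub := mixedGrad_sub c U x x y y
    rw [_root_.add_apply, ← hsub, inner_sub_left, inner_sub_left]
    have hux := hu d hd
    have hvy := hv d hd
    rw [inner_sub_left, sub_eq_zero] at hux hvy
    rw [hux, hvy]
  have hcurv : 2 * ⟪U (x - y), x - y⟫_ℝ ≤ C * ‖u - v‖ ^ 2 := by
    rw [← inner_hessian_self]
    exact hbound _ hxy _ hhessian
  have hvxy := hv _ hxy
  rw [inner_sub_left, sub_eq_zero] at hvxy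
  rw [quadEnergy_sub_eq_grad_add, hvxy]
  have hnonneg : 0 ≤ C * ‖u - v‖ ^ 2 := by positivity
  linarith

lemma exists_quadEnergy_sub_le_of_activeSet_eq {s : Set ((V →ₗ[ℝ] ℝ) × ℝ)} (hs : s.Finite) :
    ∃ C : ℝ, 0 ≤ C ∧ ∀ x y u v : V, activeSet s x = activeSet s y →
      IsConstrainedSubgradient c U (polyhedron s) u x →
      IsConstrainedSubgradient c U (polyhedron s) v y →
      quadEnergy c U x - quadEnergy c U y ≤ ⟪v, x - y⟫_ℝ + C * ‖u - v‖ ^ 2 := by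
  choose C hC hbound using fun A : Set ((V →ₗ[ℝ] ℝ) × ℝ) =>
    exists_quadEnergy_sub_le_of_mem_faceDirection c U (faceDirection A)
  obtain ⟨M, hM⟩ := (hs.finite_subsets.image C).bddAbove
  have hle (x : V) : C (activeSet s x) ≤ M := hM ⟨_, fun _ hp => hp.1, rfl⟩
  refine ⟨M, ?_, fun x y u v hxy hu hv => ?_⟩
  · exact (hC _).trans (hle 0)
  · refine (hbound (activeSet s x) x y u v (sub_mem_faceDirection hxy)
      (fun d => inner_eq_zero_of_mem_faceDirection hs hu.1 hu.2)
      fun d hd => inner_eq_zero_of_mem_faceDirection hs hv.1 hv.2 (hxy ▸ hd)).trans ?_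
    gcongr
    exact hle x

/-- Each active set that occurs late occurs infinitely often, so the limit energy `F` is attained
in the limit along a single face. -/
lemma exists_eventually_quadEnergy_sub_le {P : Set V} (hP : IsPolyhedral P)
    (hPb : Bornology.IsBounded P) {r z : ℕ → V} {F : ℝ}
    (hrz : ∀ k, IsConstrainedSubgradient c U P (r k) (z k)) (hr : Tendsto r atTop (𝓝 0))
    (hF : Tendsto (fun k => quadEnergy c U (z k)) atTop (𝓝 F)) :
    ∃ C : ℝ, 0 ≤ C ∧ ∀ᶠ k in atTop, quadEnergy c U (z k) - F ≤ C * ‖r k‖ ^ 2 := by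
  obtain ⟨s, hs, rfl⟩ := hP
  obtain ⟨C, hC, hbound⟩ := exists_quadEnergy_sub_le_of_activeSet_eq c U hs
  have hfinite : (Set.range fun k => activeSet s (z k)).Finite :=
    hs.finite_subsets.subset (Set.range_subset_iff.2 fun k _ hp => hp.1)
  refine ⟨C, hC, ?_⟩
  filter_upwards [eventually_frequently_eq_of_finite_range hfinite] with k hk
  have hinner : Tendsto (fun k' => ⟪r k', z k - z k'⟫_ℝ) atTop (𝓝 0) := by
    obtain ⟨R, hR⟩ := Metric.isBounded_iff.1 hPb
    refine squeeze_zero_norm (a := fun k' => ‖r k'‖ * R) (fun k' => ?_) ?_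
    · refine (norm_inner_le_norm _ _).trans ?_
      gcongr
      rw [← dist_eq_norm]
      exact hR (hrz k).1 (hrz k').1
    · simpa using hr.norm.mul_const R
  have hgap : Tendsto (fun k' => ⟪r k', z k - z k'⟫_ℝ + C * ‖r k - r k'‖ ^ 2) atTop
      (𝓝 (C * ‖r k‖ ^ 2)) := by
    simpa using hinner.add (((hr.const_sub (r k)).norm.pow 2).const_mul C)
  refine le_of_tendsto_of_tendsto_of_frequently (hF.const_sub _) hgap (hk.mono fun k' hk' => ?_)
  exact hbound _ _ _ _ hk'.symm (hrz k) (hrz k')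

end KurdykaLojasiewicz

section ProximalStep

variable {V : Type*} [NormedAddCommGroup V] [InnerProductSpace ℝ V] [CompleteSpace V]
  {c : V} {U : V →L[ℝ] V} {σ : ℝ} {P : Set V} {y y' z z' : V}

/-- First-order optimality of `z'` for the proximal step on `P` from `y` whose linear term is the
mixed gradient at `(y', y)`. For a block energy this says that `z'` is the block-optimal point of
the Gauss–Seidel sweep from `y` to `y'`. -/
def IsMixedProxStep (c : V) (U : V →L[ℝ] V) (σ : ℝ) (P : Set V) (y y' z' : V) : Prop :=
  z' ∈ P ∧ ∀ X ∈ P, 0 ≤ ⟪mixedGrad c U y' y + σ • (z' - y), X - z'⟫_ℝ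

namespace IsMixedProxStep

lemma mul_sq_norm_sub_le (hstep : IsMixedProxStep c U σ P y y' z') (hσ : 0 ≤ σ) (hz : z ∈ P) :
    σ * ‖z - z'‖ ^ 2 ≤ quadEnergy c U z - quadEnergy c U z'
      + (‖U‖ + σ) * (‖z - y‖ + ‖z' - y'‖) * ‖z - z'‖ := by
  set w := mixedGrad c U z' z - mixedGrad c U y' y - σ • (z - y)
  have hw : ‖w‖ ≤ (‖U‖ + σ) * (‖z - y‖ + ‖z' - y'‖) :=
    calc ‖w‖ ≤ ‖U‖ * (‖z' - y'‖ + ‖z - y‖) + σ * ‖z - y‖ := by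
          refine (norm_sub_le _ _).trans (add_le_add (norm_mixedGrad_sub_le ..) ?_)
          rw [norm_smul, Real.norm_of_nonneg hσ]
      _ ≤ (‖U‖ + σ) * (‖z - y‖ + ‖z' - y'‖) := by
          linear_combination mul_nonneg hσ (norm_nonneg (z' - y'))
  have hsplit : mixedGrad c U z' z =
      w + (mixedGrad c U y' y + σ • (z' - y)) + σ • (z - z') := by
    simp only [w, smul_sub]
    abel
  have hinner : ⟪w, z - z'⟫_ℝ + σ * ‖z - z'‖ ^ 2 ≤ quadEnergy c U z - quadEnergy c U z' := by
    rw [quadEnergy_sub, hsplit, inner_add_left, inner_add_left, real_inner_smul_left,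
      real_inner_self_eq_norm_sq]
    linarith [hstep.2 z hz]
  have hcauchy : -⟪w, z - z'⟫_ℝ ≤ (‖U‖ + σ) * (‖z - y‖ + ‖z' - y'‖) * ‖z - z'‖ :=
    calc -⟪w, z - z'⟫_ℝ ≤ ‖w‖ * ‖z - z'‖ := (neg_le_abs _).trans (abs_real_inner_le_norm _ _)
      _ ≤ (‖U‖ + σ) * (‖z - y‖ + ‖z' - y'‖) * ‖z - z'‖ := by gcongr
  linarith

lemma exists_isConstrainedSubgradient (hstep : IsMixedProxStep c U σ P y y' z') (hσ : 0 ≤ σ)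
    (z : V) : ∃ r, ‖r‖ ≤ (‖U‖ + σ) * (‖z - z'‖ + (‖z - y‖ + ‖z' - y'‖)) ∧
      IsConstrainedSubgradient c U P r z' := by
  have hzy : ‖z' - y‖ ≤ ‖z - z'‖ + ‖z - y‖ := by
    rw [norm_sub_rev z z']
    exact norm_sub_le_norm_sub_add_norm_sub z' z y
  refine ⟨mixedGrad c U z' z' - (mixedGrad c U y' y + σ • (z' - y)), ?_, hstep.1, fun X hX => ?_⟩
  · calc ‖mixedGrad c U z' z' - (mixedGrad c U y' y + σ • (z' - y))‖
        ≤ ‖U‖ * (‖z' - y'‖ + ‖z' - y‖) + σ * ‖z' - y‖ := by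
          rw [← sub_sub]
          refine (norm_sub_le _ _).trans (add_le_add (norm_mixedGrad_sub_le ..) ?_)
          rw [norm_smul, Real.norm_of_nonneg hσ]
      _ ≤ (‖U‖ + σ) * (‖z - z'‖ + (‖z - y‖ + ‖z' - y'‖)) := by
          linear_combination (‖U‖ + σ) * hzy + mul_nonneg hσ (norm_nonneg (z' - y'))
  · rw [sub_sub_cancel]
    exact hstep.2 X hX

end IsMixedProxStep

end ProximalStep

section Convergence

variable {V : Type*} [NormedAddCommGroup V] [InnerProductSpace ℝ V] [FiniteDimensional ℝ V]
  {c : V} {U : V →L[ℝ] V} {σ F : ℝ} {P : Set V} {y z : ℕ → V}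

lemma summable_norm_sub_succ_of_isMixedProxStep (hσ : 0 < σ) (hP : IsPolyhedral P)
    (hPb : Bornology.IsBounded P) (hz : ∀ k, z k ∈ P)
    (hstep : ∀ k, IsMixedProxStep c U σ P (y k) (y (k + 1)) (z (k + 1)))
    (hmono : Antitone fun k => quadEnergy c U (z k))
    (hF : Tendsto (fun k => quadEnergy c U (z k)) atTop (𝓝 F))
    (hsum : Summable fun k => ‖z k - y k‖) : Summable fun k => ‖z k - z (k + 1)‖ := by
  set δ : ℕ → ℝ := fun k => ‖z k - y k‖ + ‖z (k + 1) - y (k + 1)‖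
  have hδ : Summable δ := hsum.add ((summable_nat_add_iff 1).2 hsum)
  have hdescent (k : ℕ) : σ * ‖z k - z (k + 1)‖ ^ 2 ≤
      (quadEnergy c U (z k) - F) - (quadEnergy c U (z (k + 1)) - F)
        + (‖U‖ + σ) * δ k * ‖z k - z (k + 1)‖ := by
    rw [sub_sub_sub_cancel_right]
    exact (hstep k).mul_sq_norm_sub_le hσ.le (hz k)
  have hsteps : Tendsto (fun k => ‖z k - z (k + 1)‖) atTop (𝓝 0) :=
    tendsto_zero_of_sufficient_decrease hσ hδ.tendsto_atTop_zero (hF.sub_const F) hdescent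
  choose r hrnorm hr using fun k => (hstep k).exists_isConstrainedSubgradient hσ.le (z k)
  have hr0 : Tendsto r atTop (𝓝 0) := by
    refine squeeze_zero_norm hrnorm ?_
    simpa using (hsteps.add hδ.tendsto_atTop_zero).const_mul (‖U‖ + σ)
  obtain ⟨C, hC, hKL⟩ := exists_eventually_quadEnergy_sub_le c U hP hPb hr hr0
    ((tendsto_add_atTop_iff_nat 1).2 hF)
  refine summable_of_sufficient_decrease (C := C * (‖U‖ + σ) ^ 2) hσ (by positivity)
    (by positivity) (fun _ => norm_nonneg _) (fun _ => by positivity) hδ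
    (fun k => sub_nonneg.2 (hmono.le_of_tendsto hF k))
    (fun _ _ h => sub_le_sub_right (hmono h) F) hdescent ?_
  filter_upwards [hKL] with k hk
  calc quadEnergy c U (z (k + 1)) - F ≤ C * ‖r k‖ ^ 2 := hk
    _ ≤ C * ((‖U‖ + σ) * (‖z k - z (k + 1)‖ + δ k)) ^ 2 := by gcongr; exact hrnorm k
    _ = C * (‖U‖ + σ) ^ 2 * (‖z k - z (k + 1)‖ + δ k) ^ 2 := by ring

theorem exists_tendsto_stationary_of_isMixedProxStep (hσ : 0 < σ) (hP : IsPolyhedral P)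
    (hPb : Bornology.IsBounded P) (hz : ∀ k, z k ∈ P)
    (hstep : ∀ k, IsMixedProxStep c U σ P (y k) (y (k + 1)) (z (k + 1)))
    (hmono : Antitone fun k => quadEnergy c U (z k))
    (hF : Tendsto (fun k => quadEnergy c U (z k)) atTop (𝓝 F))
    (hsum : Summable fun k => ‖z k - y k‖) :
    ∃ x, IsConstrainedSubgradient c U P 0 x ∧ Tendsto y atTop (𝓝 x) := by
  have hsteps := summable_norm_sub_succ_of_isMixedProxStep hσ hP hPb hz hstep hmono hF hsum
  obtain ⟨x, hx⟩ := cauchySeq_tendsto_of_complete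
    (cauchySeq_of_summable_dist (f := z) (by simpa only [dist_eq_norm] using hsteps))
  choose r hrnorm hr using fun k => (hstep k).exists_isConstrainedSubgradient hσ.le (z k)
  have hbound := (hsteps.add (hsum.add ((summable_nat_add_iff 1).2 hsum))).mul_left (‖U‖ + σ)
  have hr0 : Tendsto r atTop (𝓝 0) := squeeze_zero_norm hrnorm hbound.tendsto_atTop_zero
  refine ⟨x, .of_tendsto hP.isClosed hr hr0 ((tendsto_add_atTop_iff_nat 1).2 hx), ?_⟩
  have hgap : Tendsto (fun k => z k - y k) atTop (𝓝 0) :=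
    tendsto_zero_iff_norm_tendsto_zero.2 hsum.tendsto_atTop_zero
  simpa using hx.sub hgap

end Convergence

section TraceInnerProduct

variable {K : ℕ} (A B X Y : Matrix (Fin K) (Fin K) ℝ)

lemma mip_eq_sum : mip A B = ∑ p : Fin K × Fin K, A p.1 p.2 * B p.1 p.2 := by
  simp only [mip, trace, diag_apply, mul_apply, transpose_apply, Fintype.sum_prod_type]
  exact sum_comm

lemma mip_comm : mip A B = mip B A := by
  simp only [mip_eq_sum, mul_comm]

lemma mip_add_right : mip A (X + Y) = mip A X + mip A Y := by
  simp only [mip, Matrix.mul_add, trace_add]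

lemma mip_sub_right : mip A (X - Y) = mip A X - mip A Y := by
  simp only [mip, Matrix.mul_sub, trace_sub]

lemma mip_smul_right (t : ℝ) : mip A (t • X) = t * mip A X := by
  simp only [mip, Matrix.mul_smul, trace_smul, smul_eq_mul]

lemma mip_sum_right {ι : Type*} (s : Finset ι) (X : ι → Matrix (Fin K) (Fin K) ℝ) :
    mip A (∑ i ∈ s, X i) = ∑ i ∈ s, mip A (X i) := by
  simp only [mip, Matrix.mul_sum, trace_sum]

lemma mip_mul_mul : mip (A * X * B) Y = mip X (Aᵀ * Y * Bᵀ) := by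
  simp only [mip, transpose_mul, Matrix.mul_assoc]
  rw [trace_mul_comm]
  simp only [Matrix.mul_assoc]

end TraceInnerProduct

section BlockVectors

variable {K m : ℕ}

/-- The identification of block tuples with Euclidean vectors of entries, which turns the Frobenius
norm `nZ` into the Euclidean norm. -/
def blockVec :
    (Fin m → Matrix (Fin K) (Fin K) ℝ) ≃ₗ[ℝ] EuclideanSpace ℝ (Fin m × Fin K × Fin K) where
  toFun Z := WithLp.toLp 2 fun p => Z p.1 p.2.1 p.2.2
  invFun x i := of fun a b => x (i, a, b)
  map_add' _ _ := rfl
  map_smul' _ _ := rfl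
  left_inv _ := rfl
  right_inv _ := rfl

lemma inner_blockVec (Y Z : Fin m → Matrix (Fin K) (Fin K) ℝ) :
    ⟪blockVec Y, blockVec Z⟫_ℝ = ∑ i, mip (Y i) (Z i) := by
  simp only [mip_eq_sum, PiLp.inner_apply, Fintype.sum_prod_type (α₁ := Fin m)]
  exact sum_congr rfl fun i _ => sum_congr rfl fun p _ => mul_comm _ _

lemma sq_norm_blockVec (Z : Fin m → Matrix (Fin K) (Fin K) ℝ) :
    ‖blockVec Z‖ ^ 2 = ∑ i, mip (Z i) (Z i) := by
  rw [← real_inner_self_eq_norm_sq, inner_blockVec]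

lemma norm_blockVec (Z : Fin m → Matrix (Fin K) (Fin K) ℝ) : ‖blockVec Z‖ = nZ Z := by
  rw [nZ, ← sq_norm_blockVec, Real.sqrt_sq (norm_nonneg _)]

lemma inner_blockVec_single (G : Fin m → Matrix (Fin K) (Fin K) ℝ) (i : Fin m)
    (D : Matrix (Fin K) (Fin K) ℝ) : ⟪blockVec G, blockVec (Pi.single i D)⟫_ℝ = mip (G i) D := by
  rw [inner_blockVec, sum_eq_single i, Pi.single_eq_same]
  · intro j _ hj
    rw [Pi.single_eq_of_ne hj, mip, Matrix.mul_zero, trace_zero]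
  · exact fun hi => absurd (mem_univ i) hi

end BlockVectors

section BlockSums

variable {K m : ℕ}

/-- The strictly upper triangular block operator `Z ↦ (∑_{j > i} T Z_j)_i`. -/
def upperSum (T : Matrix (Fin K) (Fin K) ℝ →ₗ[ℝ] Matrix (Fin K) (Fin K) ℝ) :
    (Fin m → Matrix (Fin K) (Fin K) ℝ) →ₗ[ℝ] Fin m → Matrix (Fin K) (Fin K) ℝ :=
  LinearMap.pi fun i => ∑ j ∈ Ioi i, T ∘ₗ LinearMap.proj j

/-- The strictly lower triangular block operator `Z ↦ (∑_{j < i} T Z_j)_i`. -/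
def lowerSum (T : Matrix (Fin K) (Fin K) ℝ →ₗ[ℝ] Matrix (Fin K) (Fin K) ℝ) :
    (Fin m → Matrix (Fin K) (Fin K) ℝ) →ₗ[ℝ] Fin m → Matrix (Fin K) (Fin K) ℝ :=
  LinearMap.pi fun i => ∑ j ∈ Iio i, T ∘ₗ LinearMap.proj j

variable (T : Matrix (Fin K) (Fin K) ℝ →ₗ[ℝ] Matrix (Fin K) (Fin K) ℝ)
  (Y Z : Fin m → Matrix (Fin K) (Fin K) ℝ)

lemma upperSum_apply (i : Fin m) : upperSum T Z i = ∑ j ∈ Ioi i, T (Z j) := by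
  simp only [upperSum, LinearMap.pi_apply, LinearMap.sum_apply, LinearMap.comp_apply,
    LinearMap.proj_apply]

lemma lowerSum_apply (i : Fin m) : lowerSum T Z i = ∑ j ∈ Iio i, T (Z j) := by
  simp only [lowerSum, LinearMap.pi_apply, LinearMap.sum_apply, LinearMap.comp_apply,
    LinearMap.proj_apply]

/-- The matrix of `upperSum T` in Euclidean coordinates. -/
def upperOp : EuclideanSpace ℝ (Fin m × Fin K × Fin K) →L[ℝ]
    EuclideanSpace ℝ (Fin m × Fin K × Fin K) :=
  LinearMap.toContinuousLinearMap (blockVec.conj (upperSum T))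

lemma upperOp_blockVec : upperOp T (blockVec Z) = blockVec (upperSum T Z) := by
  simp only [upperOp, LinearMap.coe_toContinuousLinearMap', LinearEquiv.conj_apply_apply,
    LinearEquiv.symm_apply_apply]

variable {T}

lemma adjoint_upperOp_blockVec (hT : ∀ A B, mip (T A) B = mip A (T B)) :
    ((upperOp T)†) (blockVec Y) = blockVec (lowerSum T Y) := by
  refine ext_inner_right ℝ fun x => ?_
  obtain ⟨Z, rfl⟩ := blockVec.surjective x
  rw [ContinuousLinearMap.adjoint_inner_left, upperOp_blockVec, inner_blockVec, inner_blockVec]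
  simp only [upperSum_apply, lowerSum_apply, mip_comm _ (Z _), mip_sum_right]
  simp only [mip_comm (Z _), hT]
  exact sum_comm' fun i j => by simp only [mem_univ, mem_Ioi, mem_Iio, true_and, and_true]

end BlockSums

section RepulsiveEnergy

variable {K m : ℕ} (e ϱ : Fin K → ℝ) (C : Matrix (Fin K) (Fin K) ℝ) (β : ℝ)

/-- The coupling `X ↦ ΞΛXΞCΞ + βX` between two blocks of the penalized energy. -/
def interaction : Matrix (Fin K) (Fin K) ℝ →ₗ[ℝ] Matrix (Fin K) (Fin K) ℝ :=
  LinearMap.mulLeft ℝ (diagonal e * diagonal ϱ)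
    ∘ₗ LinearMap.mulRight ℝ (diagonal e * C * diagonal e) + β • LinearMap.id

lemma interaction_apply (X : Matrix (Fin K) (Fin K) ℝ) :
    interaction e ϱ C β X = diagonal e * diagonal ϱ * X * diagonal e * C * diagonal e + β • X := by
  simp only [interaction, LinearMap.add_apply, LinearMap.comp_apply, LinearMap.mulLeft_apply,
    LinearMap.mulRight_apply, LinearMap.smul_apply, LinearMap.id_apply, Matrix.mul_assoc]

lemma mip_interaction {C : Matrix (Fin K) (Fin K) ℝ} (hC : Cᵀ = C)
    (X Y : Matrix (Fin K) (Fin K) ℝ) :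
    mip (interaction e ϱ C β X) Y = mip X (interaction e ϱ C β Y) := by
  have hcoupling (X : Matrix (Fin K) (Fin K) ℝ) :
      diagonal e * diagonal ϱ * X * diagonal e * C * diagonal e
        = (diagonal e * diagonal ϱ) * X * (diagonal e * C * diagonal e) := by
    simp only [Matrix.mul_assoc]
  have hleft : (diagonal e * diagonal ϱ)ᵀ = diagonal e * diagonal ϱ := by
    rw [diagonal_mul_diagonal, diagonal_transpose]
  have hright : (diagonal e * C * diagonal e)ᵀ = diagonal e * C * diagonal e := by
    simp only [transpose_mul, diagonal_transpose, hC, Matrix.mul_assoc]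
  rw [interaction_apply, interaction_apply, mip_comm, mip_add_right, mip_add_right,
    mip_smul_right, mip_smul_right, mip_comm Y, mip_comm Y X, hcoupling, hcoupling, mip_mul_mul,
    hleft, hright]

/-- The linear coefficient of the penalized energy, `ΛΞCΞ` in every block. -/
def linearCoeff (m : ℕ) : EuclideanSpace ℝ (Fin m × Fin K × Fin K) :=
  blockVec fun _ => diagonal ϱ * diagonal e * C * diagonal e

lemma fB_eq_quadEnergy (Z : Fin m → Matrix (Fin K) (Fin K) ℝ) :
    fB e ϱ C β Z
      = quadEnergy (linearCoeff e ϱ C m) (upperOp (interaction e ϱ C β)) (blockVec Z) := by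
  rw [quadEnergy, linearCoeff, upperOp_blockVec, inner_blockVec, inner_blockVec]
  simp only [fB, fE, upperSum_apply, interaction_apply, mip_sum_right, mip_add_right,
    mip_smul_right, sum_add_distrib, mul_sum, add_assoc, mip_comm (Z _) (_ * diagonal e)]

/-- The Gauss–Seidel gradient, which reads the blocks before `i` from `Y` and those after `i`
from `Z`. -/
def sweepGrad (Y Z : Fin m → Matrix (Fin K) (Fin K) ℝ) (i : Fin m) : Matrix (Fin K) (Fin K) ℝ :=
  diagonal ϱ * diagonal e * C * diagonal e + lowerSum (interaction e ϱ C β) Y i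
    + upperSum (interaction e ϱ C β) Z i

lemma mixedGrad_blockVec {C : Matrix (Fin K) (Fin K) ℝ} (hC : Cᵀ = C)
    (Y Z : Fin m → Matrix (Fin K) (Fin K) ℝ) :
    mixedGrad (linearCoeff e ϱ C m) (upperOp (interaction e ϱ C β)) (blockVec Y) (blockVec Z)
      = blockVec (sweepGrad e ϱ C β Y Z) := by
  rw [mixedGrad, adjoint_upperOp_blockVec _ (mip_interaction e ϱ β hC), upperOp_blockVec]
  rfl

lemma sweepGrad_self (Z : Fin m → Matrix (Fin K) (Fin K) ℝ) :
    sweepGrad e ϱ C β Z Z = gradB e ϱ C β Z := by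
  ext1 i
  have hsplit : univ.erase i = Iio i ∪ Ioi i := by
    ext j
    simp only [mem_erase, mem_univ, and_true, mem_union, mem_Iio, mem_Ioi, ne_iff_lt_or_gt]
  have hdisjoint : Disjoint (Iio i) (Ioi i) :=
    disjoint_left.2 fun j hlt hgt => (mem_Iio.1 hlt).asymm (mem_Ioi.1 hgt)
  have hdiagonal : diagonal ϱ * diagonal e = diagonal e * diagonal ϱ := by
    simp only [diagonal_mul_diagonal, mul_comm]
  rw [sweepGrad, gradB, hsplit, sum_union hdisjoint, hdiagonal]
  simp only [lowerSum_apply, upperSum_apply, interaction_apply, sum_add_distrib, smul_add, smul_sum]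
  abel

end RepulsiveEnergy

section FeasibleSet

variable {K : ℕ} (e ϱ : Fin K → ℝ) (m : ℕ)

lemma isPolyhedral_Sset : IsPolyhedral (Sset e ϱ) := by
  have heq : Sset e ϱ = (⋂ a, {W | W.mulVec e a = 1})
      ∩ ((⋂ a, {W | (Wᵀ.mulVec fun j => e j * ϱ j) a = ϱ a})
      ∩ ({W | W.trace = 0} ∩ ⋂ a, ⋂ b, {W | 0 ≤ W a b})) := by
    ext W
    simp only [Sset, Set.mem_ofPred_eq, Set.mem_inter_iff, Set.mem_iInter, funext_iff]
  rw [heq]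
  refine .inter (.iInter fun a => isPolyhedral_setOf_eq ⟨?_, ?_⟩ 1)
    (.inter (.iInter fun a => isPolyhedral_setOf_eq ⟨?_, ?_⟩ (ϱ a))
      (.inter (isPolyhedral_setOf_eq (traceLinearMap (Fin K) ℝ ℝ).isLinear 0)
        (.iInter fun a => .iInter fun b =>
          isPolyhedral_setOf_le (entryLinearMap ℝ ℝ a b).isLinear 0)))
  · exact fun W W' => congrFun (add_mulVec W W' e) a
  · exact fun t W => congrFun (smul_mulVec t W e) a
  · exact fun W W' => by rw [transpose_add, add_mulVec, Pi.add_apply]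
  · exact fun t W => by rw [transpose_smul, smul_mulVec, Pi.smul_apply]

/-- The feasible region `S^m` in Euclidean coordinates. -/
def feasibleSet : Set (EuclideanSpace ℝ (Fin m × Fin K × Fin K)) :=
  {x | ∀ i, blockVec.symm x i ∈ Sset e ϱ}

variable {e ϱ m}

lemma blockVec_mem_feasibleSet {Z : Fin m → Matrix (Fin K) (Fin K) ℝ} :
    blockVec Z ∈ feasibleSet e ϱ m ↔ ∀ i, Z i ∈ Sset e ϱ := by
  rw [feasibleSet, Set.mem_ofPred_eq, LinearEquiv.symm_apply_apply]

lemma isPolyhedral_feasibleSet : IsPolyhedral (feasibleSet e ϱ m) := by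
  rw [feasibleSet, Set.ofPred_forall]
  exact .iInter fun i =>
    (isPolyhedral_Sset e ϱ).preimage
      (LinearMap.proj (φ := fun _ => Matrix (Fin K) (Fin K) ℝ) i ∘ₗ blockVec.symm.toLinearMap)

lemma abs_apply_le_of_mem_Sset (he : ∀ a, 0 < e a) {W : Matrix (Fin K) (Fin K) ℝ}
    (hW : W ∈ Sset e ϱ) (a b : Fin K) : |W a b| ≤ 1 / e b := by
  rw [abs_of_nonneg (hW.2.2.2 a b), le_div_iff₀ (he b)]
  calc W a b * e b ≤ ∑ j, W a j * e j :=
        single_le_sum (fun j _ => mul_nonneg (hW.2.2.2 a j) (he j).le) (mem_univ b)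
    _ = 1 := congrFun hW.1 a

lemma isBounded_feasibleSet (he : ∀ a, 0 < e a) :
    Bornology.IsBounded (feasibleSet e ϱ m) := by
  refine isBounded_iff_forall_norm_le.2
    ⟨√(∑ p : Fin m × Fin K × Fin K, (1 / e p.2.2) ^ 2), fun x hx => ?_⟩
  rw [EuclideanSpace.norm_eq]
  gcongr with p
  exact abs_apply_le_of_mem_Sset he (hx p.1) p.2.1 p.2.2

end FeasibleSet

section BlockOptimality

variable {K m : ℕ} {e ϱ : Fin K → ℝ} {C : Matrix (Fin K) (Fin K) ℝ} {β σ : ℝ}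

lemma blockObj_sub_blockObj (hC : Cᵀ = C) (Zold Znew : Fin m → Matrix (Fin K) (Fin K) ℝ)
    (i : Fin m) (X X' : Matrix (Fin K) (Fin K) ℝ) :
    blockObj e ϱ C β σ Zold Znew i X - blockObj e ϱ C β σ Zold Znew i X'
      = mip (sweepGrad e ϱ C β Znew Zold i) (X - X')
        + (σ / 2 * mip (X - Zold i) (X - Zold i) - σ / 2 * mip (X' - Zold i) (X' - Zold i)) := by
  set H : Matrix (Fin K) (Fin K) ℝ → Fin m → Matrix (Fin K) (Fin K) ℝ :=
    fun X j => if j < i then Znew j else if j = i then X else Zold j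
  have hdiff : H X - H X' = Pi.single i (X - X') := by
    ext1 j
    rcases lt_trichotomy j i with hj | rfl | hj
    · simp [H, hj, hj.ne]
    · simp [H]
    · simp [H, hj.not_gt, hj.ne']
  have hgrad : sweepGrad e ϱ C β (H X') (H X) i = sweepGrad e ϱ C β Znew Zold i := by
    simp only [sweepGrad, lowerSum_apply, upperSum_apply]
    refine congrArg₂ _ (congrArg _ (sum_congr rfl fun j hj => ?_)) (sum_congr rfl fun j hj => ?_)
    · simp only [H, if_pos (mem_Iio.1 hj)]
    · simp only [H, if_neg (mem_Ioi.1 hj).not_gt, if_neg (mem_Ioi.1 hj).ne']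
  have henergy : fB e ϱ C β (H X) - fB e ϱ C β (H X')
      = mip (sweepGrad e ϱ C β Znew Zold i) (X - X') := by
    rw [fB_eq_quadEnergy, fB_eq_quadEnergy, quadEnergy_sub, mixedGrad_blockVec _ _ _ hC,
      ← map_sub blockVec, hdiff, inner_blockVec_single, hgrad]
  rw [blockObj, blockObj, add_sub_add_comm, henergy]

lemma isMixedProxStep_of_isBlockOpt (hC : Cᵀ = C)
    {Zseq Zbar : ℕ → Fin m → Matrix (Fin K) (Fin K) ℝ}
    (hopt : IsBlockOpt e ϱ C β σ Zseq Zbar) (k : ℕ) :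
    IsMixedProxStep (linearCoeff e ϱ C m) (upperOp (interaction e ϱ C β)) σ (feasibleSet e ϱ m)
      (blockVec (Zseq k)) (blockVec (Zseq (k + 1))) (blockVec (Zbar (k + 1))) := by
  have hmem : blockVec (Zbar (k + 1)) ∈ feasibleSet e ϱ m :=
    blockVec_mem_feasibleSet.2 fun i => (hopt k i).1
  refine ⟨hmem, fun X hX => inner_add_smul_sub_nonneg_of_isMinOn
    isPolyhedral_feasibleSet.convex hmem (isMinOn_iff.2 fun x hx => ?_) hX⟩
  obtain ⟨Z, rfl⟩ := blockVec.surjective x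
  simp only [mixedGrad_blockVec _ _ _ hC, ← map_sub blockVec, inner_blockVec, sq_norm_blockVec,
    mul_sum, ← sum_add_distrib, Pi.sub_apply]
  refine sum_le_sum fun i _ => ?_
  have hblock := sub_nonneg.2 ((hopt k i).2 (Z i) (blockVec_mem_feasibleSet.1 hx i))
  rw [blockObj_sub_blockObj hC, mip_sub_right] at hblock
  linarith

lemma isKKT_of_isConstrainedSubgradient (hC : Cᵀ = C) {Z : Fin m → Matrix (Fin K) (Fin K) ℝ}
    (hZ : IsConstrainedSubgradient (linearCoeff e ϱ C m) (upperOp (interaction e ϱ C β))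
      (feasibleSet e ϱ m) 0 (blockVec Z)) : IsKKT e ϱ C β Z := by
  have hfeasible := blockVec_mem_feasibleSet.1 hZ.1
  refine ⟨hfeasible, fun i X hX => ?_⟩
  have hdiff : Function.update Z i X - Z = Pi.single i (X - Z i) := by
    ext1 j
    rcases eq_or_ne j i with rfl | hj
    · rw [Pi.sub_apply, Function.update_self, Pi.single_eq_same]
    · rw [Pi.sub_apply, Function.update_of_ne hj, Pi.single_eq_of_ne hj, sub_self]
  have hmem : blockVec (Function.update Z i X) ∈ feasibleSet e ϱ m :=
    blockVec_mem_feasibleSet.2 <|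
      (Function.forall_update_iff Z fun _ W => W ∈ Sset e ϱ).2 ⟨hX, fun j _ => hfeasible j⟩
  have hnonneg := hZ.2 _ hmem
  rwa [sub_zero, mixedGrad_blockVec _ _ _ hC, sweepGrad_self, ← map_sub blockVec, hdiff,
    inner_blockVec_single] at hnonneg

end BlockOptimality

theorem pbcd_inexact_convergence_to_KKT_general {K m : ℕ} {e ϱ : Fin K → ℝ} (he : ∀ a, 0 < e a)
    {C : Matrix (Fin K) (Fin K) ℝ} (hC : Cᵀ = C) {β σ : ℝ} (hσ : 0 < σ)
    {Zseq Zbar : ℕ → Fin m → Matrix (Fin K) (Fin K) ℝ} {Fbar : ℝ}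
    (hopt : IsBlockOpt e ϱ C β σ Zseq Zbar)
    (hmono : ∀ k, 1 ≤ k → fB e ϱ C β (Zbar (k + 1)) ≤ fB e ϱ C β (Zbar k))
    (hlim : Tendsto (fun k => fB e ϱ C β (Zbar (k + 1))) atTop (𝓝 Fbar))
    (hsum : Summable fun k => nZ (Zbar (k + 1) - Zseq (k + 1))) :
    ∃ Zstar, IsKKT e ϱ C β Zstar ∧ Tendsto Zseq atTop (𝓝 Zstar) := by
  have hstep := isMixedProxStep_of_isBlockOpt hC hopt
  simp only [fB_eq_quadEnergy] at hmono hlim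
  simp only [← norm_blockVec, map_sub] at hsum
  obtain ⟨x, hx, hconv⟩ := exists_tendsto_stationary_of_isMixedProxStep hσ
    isPolyhedral_feasibleSet (isBounded_feasibleSet he) (fun k => (hstep k).1)
    (fun k => hstep (k + 1)) (antitone_nat_of_succ_le fun k => hmono (k + 1) k.succ_pos) hlim hsum
  obtain ⟨Zstar, rfl⟩ := blockVec.surjective x
  refine ⟨Zstar, isKKT_of_isConstrainedSubgradient hC hx, (tendsto_add_atTop_iff_nat 1).1 ?_⟩
  have hcont : Continuous (blockVec (K := K) (m := m)).symm :=
    blockVec.symm.toLinearMap.continuous_of_finiteDimensional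
  simpa only [Function.comp_def, LinearEquiv.symm_apply_apply] using (hcont.tendsto _).comp hconv

/-- Theorem 3.2, part 1.
There is a threshold `σ₀ > 0` such that for every `σ ≥ σ₀`, any inexact PBCD sequence
`{Z^{(k)}}` whose block-optimal sequence `{Z̄^{(k)}}` satisfies (i) `{f_β(Z̄^{(k)})}` is
nonincreasing with limit `F̄` and `f_β(Z̄^{(k)}) > F̄` for all `k ≥ 1`, and
(ii) `Σ_{k≥1} ‖Z̄^{(k)} − Z^{(k)}‖_F < ∞`, converges to a KKT point of `(P_β)`. -/
theorem pbcd_inexact_convergence_to_KKT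
    (K N : ℕ) (hK : 1 ≤ K) (hN : 3 ≤ N)
    (e ϱ : Fin K → ℝ) (he : ∀ a, 0 < e a) (hϱ : ∀ a, 0 ≤ ϱ a)
    (C : Matrix (Fin K) (Fin K) ℝ) (hCsym : Cᵀ = C)
    (hC0 : ∀ a b, 0 ≤ C a b) (hCd : ∀ a, C a a = 0)
    (hS : (Sset e ϱ).Nonempty)
    (β : ℝ) (hβ : 0 < β) :
    ∃ σ₀ : ℝ, 0 < σ₀ ∧ ∀ σ : ℝ, σ₀ ≤ σ →
      ∀ (Zseq Zbar : ℕ → Fin (N - 1) → Matrix (Fin K) (Fin K) ℝ) (Fbar : ℝ),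
        IsBlockOpt e ϱ C β σ Zseq Zbar →
        (∀ k : ℕ, 1 ≤ k → fB e ϱ C β (Zbar (k + 1)) ≤ fB e ϱ C β (Zbar k)) →
        Tendsto (fun k : ℕ => fB e ϱ C β (Zbar (k + 1))) atTop (nhds Fbar) →
        (∀ k : ℕ, 1 ≤ k → Fbar < fB e ϱ C β (Zbar k)) →
        Summable (fun k : ℕ => nZ (Zbar (k + 1) - Zseq (k + 1))) →
        ∃ Zstar : Fin (N - 1) → Matrix (Fin K) (Fin K) ℝ,
          IsKKT e ϱ C β Zstar ∧ Tendsto Zseq atTop (nhds Zstar) :=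
  ⟨1, one_pos, fun σ hσ Zseq Zbar Fbar hopt hmono hlim _ hsum =>
    pbcd_inexact_convergence_to_KKT_general he hCsym (one_pos.trans_le hσ) hopt hmono hlim hsum⟩
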